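/- Every combinatorial graph map f : Γ → Λ between connected graphs admits a factorization Γ → Σ → Λ in which the first map is inert and the second is active; moreover, for any two such factorizations Γ → Σ → Λ and Γ → Σ' → Λ there is a unique isomorphism of graphs Σ ≅ Σ' compatible with both factorizations. In other words, the inert and active maps form a factorization system on the category of connected graphs. -/

import Mathlib

/-- A graph: finite sets `V` of vertices and `A` of arcs (half-edges), a fixed-point
free involution `† = dag` on arcs, and an endpoint map `t : A → V ⊔ {∞}`
(we encode `V ⊔ {∞}` as `Option V` with `∞ = none`). -/
structure CGraph : Type 1 where
  V : Type
  A : Type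
  [fintypeV : Fintype V]
  [fintypeA : Fintype A]
  dag : A → A
  dag_dag : ∀ a, dag (dag a) = a
  dag_ne : ∀ a, dag a ≠ a
  t : A → Option V

attribute [instance] CGraph.fintypeV CGraph.fintypeA

namespace CGraph

/-- The generating relation on `V ⊔ A`: an arc touches its `†`-partner, and an arc
touches its endpoint (when the endpoint is a vertex). -/
inductive Touch (G : CGraph) : (G.V ⊕ G.A) → (G.V ⊕ G.A) → Prop
  | dag (a : G.A) : Touch G (Sum.inr a) (Sum.inr (G.dag a))
  | incid (a : G.A) (v : G.V) : G.t a = some v → Touch G (Sum.inr a) (Sum.inl v)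

/-- A graph is connected if `V ⊔ A` is nonempty and the equivalence relation generated
by `Touch` has exactly one equivalence class. -/
def Connected (G : CGraph) : Prop :=
  Nonempty (G.V ⊕ G.A) ∧ ∀ x y : G.V ⊕ G.A, Relation.EqvGen G.Touch x y

/-- The valence of a vertex: the number of arcs ending at it. -/
noncomputable def valence (G : CGraph) (v : G.V) : ℕ :=
  Nat.card {a : G.A // G.t a = some v}

/-- A vertex is bivalent if exactly two arcs end at it. -/
def Bivalent (G : CGraph) (v : G.V) : Prop := G.valence v = 2

/-- `x ∈ V ⊔ {∞}` is bivalent or `∞`. -/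
def BivAt (G : CGraph) (x : Option G.V) : Prop :=
  x = none ∨ ∃ v, x = some v ∧ G.Bivalent v

/-- `IsPath G l s e`: the list of arcs `l = [a₁, …, aₙ]` is a path from `s` to `e`:
`t(a₁†) = s`, `t(aᵢ) = t(aᵢ₊₁†)` for `i < n`, and `t(aₙ) = e`; the empty path is a
path from `s` to `e` exactly when `s = e`. -/
def IsPath (G : CGraph) : List G.A → Option G.V → Option G.V → Prop
  | [], s, e => s = e
  | a :: l, s, e => G.t (G.dag a) = s ∧ G.IsPath l (G.t a) e

/-- A path is bivalent if each of its intermediate vertices `t(aᵢ)`, `i < n`, is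
bivalent or `∞`. -/
def IsBivalentPath (G : CGraph) (l : List G.A) (s e : Option G.V) : Prop :=
  G.IsPath l s e ∧
    ∀ (i : ℕ) (h : i + 1 < l.length), G.BivAt (G.t (l.get ⟨i, Nat.lt_of_succ_lt h⟩))

/-- The underlying data of a combinatorial graph map `Γ → Λ`: a basepoint-preserving
map on vertices-with-∞ and a map on arcs in the opposite direction. -/
structure PreMap (G H : CGraph) : Type where
  fv : Option G.V → Option H.V
  fa : H.A → G.A

/-- `FiberList f a l`: the list `l` enumerates `f_a⁻¹(a)` (without repetitions) and is
a bivalent path in the target graph between the images of the endpoints of `a`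
(oriented so that the identity map is a graph map). -/
def FiberList {G H : CGraph} (f : PreMap G H) (a : G.A) (l : List H.A) : Prop :=
  (∀ b : H.A, b ∈ l ↔ f.fa b = a) ∧ l.Nodup ∧
    H.IsBivalentPath l (f.fv (G.t (G.dag a))) (f.fv (G.t a))

/-- `MidVertexOf H l w`: `w` occurs as an intermediate vertex of the path `l`. -/
def MidVertexOf (H : CGraph) (l : List H.A) (w : H.V) : Prop :=
  ∃ (i : ℕ) (h : i + 1 < l.length), H.t (l.get ⟨i, Nat.lt_of_succ_lt h⟩) = some w

/-- `OnFiberPath f w a`: the vertex `w` of the target occurs as an intermediate vertex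
of the bivalent path enumerating `f_a⁻¹(a)`. -/
def OnFiberPath {G H : CGraph} (f : PreMap G H) (w : H.V) (a : G.A) : Prop :=
  ∃ l : List H.A, FiberList f a l ∧ MidVertexOf H l w

/-- The conditions for a pair `(f_v, f_a)` to be a combinatorial graph map:
(1) `f_v(∞) = ∞`; (2) `f_a` commutes with `†`; (3) each `f_a⁻¹(a)` admits an ordering
making it a bivalent path between the images of the endpoints of `a`; (4) vertices
identified by `f_v` are joined by a path of arcs outside the image of `f_a`;
(5) each vertex of the target not in the image of `f_v` is bivalent and occurs as an
intermediate vertex of exactly one of the bivalent paths from (3) (where the paths of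
an arc and of its `†`-partner are regarded as the same path). -/
def IsGraphMap {G H : CGraph} (f : PreMap G H) : Prop :=
  f.fv none = none ∧
  (∀ b : H.A, f.fa (H.dag b) = G.dag (f.fa b)) ∧
  (∀ a : G.A, ∃ l : List H.A, FiberList f a l) ∧
  (∀ v v' : G.V, f.fv (some v) = f.fv (some v') → f.fv (some v) ≠ none →
    ∃ l : List G.A, (∀ c ∈ l, c ∉ Set.range f.fa) ∧ G.IsPath l (some v) (some v')) ∧
  (∀ w : H.V, (∀ v : G.V, f.fv (some v) ≠ some w) →
    H.Bivalent w ∧ ∃ a : G.A, OnFiberPath f w a ∧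
      ∀ a' : G.A, OnFiberPath f w a' → a' = a ∨ a' = G.dag a)

/-- The identity pre-map. -/
def PreMap.id (G : CGraph) : PreMap G G := ⟨fun x => x, fun a => a⟩

/-- Composition of pre-maps: `f` first, then `g`. -/
def PreMap.comp {G H K : CGraph} (f : PreMap G H) (g : PreMap H K) : PreMap G K :=
  ⟨g.fv ∘ f.fv, f.fa ∘ g.fa⟩

/-- A combinatorial graph map is inert if `f_v⁻¹(w)` has exactly one element for every
vertex `w` of the target, and `f_a⁻¹(a)` is empty only when `f_v(t(a)) = ∞`. -/
def IsInert {G H : CGraph} (f : PreMap G H) : Prop :=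
  (∀ w : H.V, ∃! v : G.V, f.fv (some v) = some w) ∧
  (∀ a : G.A, (∀ b : H.A, f.fa b ≠ a) → f.fv (G.t a) = none)

/-- A combinatorial graph map is active if `f_v⁻¹(∞) = {∞}` and none of the bivalent
paths `f_a⁻¹(a)` passes through `∞`. -/
def IsActive {G H : CGraph} (f : PreMap G H) : Prop :=
  (∀ x : Option G.V, f.fv x = none → x = none) ∧
  (∀ (a : G.A) (l : List H.A), FiberList f a l →
    ∀ (i : ℕ) (h : i + 1 < l.length), H.t (l.get ⟨i, Nat.lt_of_succ_lt h⟩) ≠ none)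

/-- An isomorphism of graphs: a graph map with a two-sided inverse graph map. -/
def IsGraphIso {G H : CGraph} (f : PreMap G H) : Prop :=
  IsGraphMap f ∧ ∃ g : PreMap H G, IsGraphMap g ∧
    f.comp g = PreMap.id G ∧ g.comp f = PreMap.id H

end CGraph

/-!
STATEMENT 11: Every combinatorial graph map `f : Γ → Λ` between connected graphs
admits a factorization `Γ → Σ → Λ` in which the first map is inert and the second is
active; moreover, for any two such factorizations `Γ → Σ → Λ` and `Γ → Σ' → Λ` there
is a unique isomorphism of graphs `Σ ≅ Σ'` compatible with both factorizations.
(In other words, inert and active maps form a factorization system on the category of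
connected graphs.)
-/


namespace CGraph

/-! ### Basic facts on lists, paths and connectedness -/

lemma mids_iff {α : Type} (l : List α) (P : α → Prop) :
    (∀ (i : ℕ) (h : i + 1 < l.length), P (l.get ⟨i, Nat.lt_of_succ_lt h⟩)) ↔
      ∀ l1 b c l2, l = l1 ++ b :: c :: l2 → P b := by
  constructor
  · rintro h l1 b c l2 rfl
    have := h l1.length (by simp)
    simpa using this
  · intro h i hi
    refine h (l.take i) _ (l[i+1]) (l.drop (i+2)) ?_
    simp

lemma Connected.ind {G : CGraph} (hG : G.Connected) (P : G.V ⊕ G.A → Prop)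
    (h : ∀ x y, G.Touch x y → (P x ↔ P y)) {x : G.V ⊕ G.A} (hx : P x) (y : G.V ⊕ G.A) : P y := by
  have key : ∀ x y, Relation.EqvGen G.Touch x y → (P x ↔ P y) := by
    intro x y hxy
    induction hxy with
    | rel x y hh => exact h x y hh
    | refl x => exact Iff.rfl
    | symm x y _ ih => exact ih.symm
    | trans x y z _ _ ih1 ih2 => exact ih1.trans ih2
  exact (key x y (hG.2 x y)).1 hx

lemma biv_two {H : CGraph} {w : H.V} (hw : H.Bivalent w) {b c d : H.A}
    (hb : H.t b = some w) (hc : H.t c = some w) (hbc : b ≠ c) (hd : H.t d = some w) :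
    d = b ∨ d = c := by
  obtain ⟨x, y, hxy, hu⟩ := Nat.card_eq_two_iff.1 hw
  have hb' : (⟨b, hb⟩ : {a : H.A // H.t a = some w}) ∈ ({x, y} : Set _) := by rw [hu]; trivial
  have hc' : (⟨c, hc⟩ : {a : H.A // H.t a = some w}) ∈ ({x, y} : Set _) := by rw [hu]; trivial
  have hd' : (⟨d, hd⟩ : {a : H.A // H.t a = some w}) ∈ ({x, y} : Set _) := by rw [hu]; trivial
  simp only [Set.mem_insert_iff, Set.mem_singleton_iff, Subtype.ext_iff] at hb' hc' hd'
  grind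

lemma biv_exists {H : CGraph} {w : H.V} (hw : H.Bivalent w) : ∃ b, H.t b = some w := by
  obtain ⟨x, y, hxy, hu⟩ := Nat.card_eq_two_iff.1 hw
  exact ⟨x.1, x.2⟩

lemma isPath_append {G : CGraph} (l1 l2 : List G.A) (s e : Option G.V) :
    G.IsPath (l1 ++ l2) s e ↔ ∃ m, G.IsPath l1 s m ∧ G.IsPath l2 m e := by
  induction l1 generalizing s with
  | nil => simp [IsPath]
  | cons a l ih => simp [IsPath, ih]; grind

lemma isPath_adj {G : CGraph} {l1 l2 : List G.A} {b c : G.A} {s e : Option G.V}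
    (h : G.IsPath (l1 ++ b :: c :: l2) s e) : G.t (G.dag c) = G.t b := by
  obtain ⟨m, _, h2⟩ := (isPath_append _ _ _ _).1 h
  exact h2.2.1

lemma isPath_last {G : CGraph} {l1 : List G.A} {b : G.A} {s e : Option G.V}
    (h : G.IsPath (l1 ++ [b]) s e) : G.t b = e := by
  obtain ⟨m, _, h2⟩ := (isPath_append _ _ _ _).1 h
  exact h2.2

section fib

variable {G H : CGraph} {f : PreMap G H} {a : G.A} {l : List H.A}

lemma FiberList.path (hl : FiberList f a l) :
    H.IsPath l (f.fv (G.t (G.dag a))) (f.fv (G.t a)) := hl.2.2.1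

lemma FiberList.biv (hl : FiberList f a l) {l1 b c l2} (h : l = l1 ++ b :: c :: l2) :
    H.BivAt (H.t b) :=
  (mids_iff l (fun b => H.BivAt (H.t b))).1 hl.2.2.2 _ _ _ _ h

lemma FiberList.adj (hl : FiberList f a l) {l1 b c l2} (h : l = l1 ++ b :: c :: l2) :
    H.t (H.dag c) = H.t b := by
  have := hl.path
  rw [h] at this
  exact isPath_adj this

lemma FiberList.last (hl : FiberList f a l) {l1 b} (h : l = l1 ++ [b]) :
    H.t b = f.fv (G.t a) := by
  have := hl.path
  rw [h] at this
  exact isPath_last this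

lemma FiberList.head (hl : FiberList f a l) {l1 b} (h : l = b :: l1) :
    H.t (H.dag b) = f.fv (G.t (G.dag a)) := by
  have := hl.path
  rw [h] at this
  exact this.1

lemma FiberList.mk' (h1 : ∀ b : H.A, b ∈ l ↔ f.fa b = a) (h2 : l.Nodup)
    (h3 : H.IsPath l (f.fv (G.t (G.dag a))) (f.fv (G.t a)))
    (h4 : ∀ l1 b c l2, l = l1 ++ b :: c :: l2 → H.BivAt (H.t b)) : FiberList f a l :=
  ⟨h1, h2, h3, (mids_iff l (fun b => H.BivAt (H.t b))).2 h4⟩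

/-- arcs in one fibre are never `†`-partners -/
lemma FiberList.ne_dag (hd : ∀ b, f.fa (H.dag b) = G.dag (f.fa b)) (hl : FiberList f a l)
    {b c : H.A} (hb : b ∈ l) (hc : c ∈ l) : b ≠ H.dag c := by
  rintro rfl
  have h1 := (hl.1 _).1 hb
  have h2 := (hl.1 _).1 hc
  rw [hd, h2] at h1
  exact G.dag_ne a h1

lemma FiberList.two_arcs (hd : ∀ b, f.fa (H.dag b) = G.dag (f.fa b)) (hl : FiberList f a l)
    {l1 b c l2} (h : l = l1 ++ b :: c :: l2) {w : H.V} (hb : H.t b = some w) {d : H.A}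
    (hdw : H.t d = some w) : d = b ∨ d = H.dag c := by
  have hbiv : H.Bivalent w := by
    rcases hl.biv h with h' | ⟨v, h1, h2⟩
    · simp [hb] at h'
    · rw [hb] at h1; cases h1; exact h2
  refine biv_two hbiv hb ?_ ?_ hdw
  · rw [hl.adj h, hb]
  · exact hl.ne_dag hd (by simp [h]) (by simp [h])

lemma dag_inj {x y : H.A} (h : H.dag x = H.dag y) : x = y := by
  rw [← H.dag_dag x, h, H.dag_dag]

lemma fiber_nil (hf : IsGraphMap f) (h : ∀ b, f.fa b ≠ a) : FiberList f a [] := by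
  obtain ⟨l, hl⟩ := hf.2.2.1 a
  have : l = [] := by
    rw [List.eq_nil_iff_forall_not_mem]
    intro b hb
    exact h b ((hl.1 b).1 hb)
  exact this ▸ hl

lemma fiber_nil_eq (hf : IsGraphMap f) (h : ∀ b, f.fa b ≠ a) :
    f.fv (G.t (G.dag a)) = f.fv (G.t a) := (fiber_nil hf h).path

/-- Intermediate vertices of fibre paths are not in the image. -/
lemma mid_not_image (hG : G.Connected) (hf : IsGraphMap f) (hl : FiberList f a l)
    {l1 b c l2} (h : l = l1 ++ b :: c :: l2) {w : H.V} (hb : H.t b = some w) (v0 : G.V) :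
    f.fv (some v0) ≠ some w := by
  intro hv0
  have hd := hf.2.1
  have two : ∀ {d}, H.t d = some w → d = b ∨ d = H.dag c := hl.two_arcs hd h hb
  have hnd := hl.2.1
  rw [h] at hnd
  have hbl : b ∈ l := by simp [h]
  have hcl : c ∈ l := by simp [h]
  have claim : ∀ d v, G.t d = some v → f.fv (some v) = some w → ∀ x, f.fa x ≠ d := by
    intro d v hdv hv x hx
    obtain ⟨l', hl'⟩ := hf.2.2.1 d
    have hne : l' ≠ [] := by
      rintro rfl
      simpa using (hl'.1 x).2 hx
    obtain ⟨m, z, rfl⟩ : ∃ m z, l' = m ++ [z] := ⟨_, _, (List.dropLast_append_getLast hne).symm⟩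
    have hz : H.t z = some w := by rw [hl'.last rfl, hdv, hv]
    have hzd : f.fa z = d := (hl'.1 z).1 (by simp)
    have hba : f.fa b = a := (hl.1 b).1 hbl
    have hca : f.fa c = a := (hl.1 c).1 hcl
    rcases two hz with rfl | rfl
    · obtain ⟨m', y, hm'⟩ : ∃ m z, c :: l2 = m ++ [z] :=
        ⟨_, _, (List.dropLast_append_getLast (by simp)).symm⟩
      have hy : H.t y = some w := by
        rw [hl.last (l1 := l1 ++ z :: m') (b := y) (by simp [h, hm']), ← hba, hzd, hdv, hv]
      have hyl : y ∈ l := by simp [h, hm']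
      rcases two hy with rfl | rfl
      · rw [hm'] at hnd
        simp [List.nodup_append] at hnd
      · exact hl.ne_dag hd hyl hcl rfl
    · rw [hd, hca] at hzd
      have hx : ∃ y m', l = y :: m' ∧ (y = b ∨ y ∈ l1) := by
        cases l1 with
        | nil => exact ⟨_, _, h, Or.inl rfl⟩
        | cons y m => exact ⟨_, _, h, Or.inr (by simp)⟩
      obtain ⟨y, m', hy, hy'⟩ := hx
      have hyl : y ∈ l := by simp [hy]
      have hyw : H.t (H.dag y) = some w := by rw [hl.head hy, hzd, hdv, hv]
      rcases two hyw with h1 | h1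
      · exact hl.ne_dag hd hbl hyl h1.symm
      · have := dag_inj h1
        subst this
        rcases hy' with rfl | hy'
        · simp [List.nodup_append] at hnd
        · rw [List.nodup_append] at hnd
          exact hnd.2.2 _ hy' _ (by simp) rfl
  have key := hG.ind (fun x => match x with
    | Sum.inl v => f.fv (some v) = some w
    | Sum.inr d => (∀ x, f.fa x ≠ d) ∧ f.fv (G.t d) = some w) (by
      intro x y hxy
      cases hxy with
      | dag d =>
        have aux : ∀ d, ((∀ x, f.fa x ≠ d) ∧ f.fv (G.t d) = some w) →
            ((∀ x, f.fa x ≠ G.dag d) ∧ f.fv (G.t (G.dag d)) = some w) := by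
          intro d ⟨h1, h2⟩
          refine ⟨fun x hx => h1 (H.dag x) ?_, ?_⟩
          · rw [hd, hx, G.dag_dag]
          · rw [fiber_nil_eq hf h1, h2]
        refine ⟨aux d, fun h => ?_⟩
        have := aux _ h
        rwa [G.dag_dag] at this
      | incid d v hdv =>
        refine ⟨fun h => ?_, fun h => ⟨claim d v hdv h, ?_⟩⟩
        · show f.fv (some v) = some w
          rw [← hdv]; exact h.2
        · rw [hdv]; exact h) (x := Sum.inl v0) hv0 (Sum.inr a)
  exact key.1 b ((hl.1 b).1 hbl)

/-- The source map is injective on each fibre. -/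
lemma src_inj (hH : H.Connected) (hd : ∀ b, f.fa (H.dag b) = G.dag (f.fa b))
    (hl : FiberList f a l) {b c : H.A} (hb : b ∈ l) (hc : c ∈ l)
    (hbc : H.t (H.dag b) = H.t (H.dag c)) : b = c := by
  -- the ordered version
  have main : ∀ l1 b m c l2, l = l1 ++ b :: (m ++ c :: l2) → H.t (H.dag b) = H.t (H.dag c) →
      False := by
    intro l1 b m c l2 h hbc
    have hnd := hl.2.1
    have hbl : b ∈ l := by simp [h]
    have hcl : c ∈ l := by simp [h]
    obtain ⟨m', y, hm'⟩ : ∃ m' z, b :: m = m' ++ [z] :=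
        ⟨_, _, (List.dropLast_append_getLast (by simp)).symm⟩
    have h' : l = (l1 ++ m') ++ y :: c :: l2 := by
      have : l = l1 ++ (b :: m) ++ c :: l2 := by simp [h]
      rw [this, hm']; simp
    have hyl : y ∈ l := by simp [h']
    have hyc := hl.adj h'
    have hcm : c ∉ b :: m := by
      intro hcm
      rw [h, ← List.cons_append, List.nodup_append, List.nodup_append] at hnd
      exact hnd.2.1.2.2 c hcm c (by simp) rfl
    have hsub : ∀ d ∈ b :: m, d ∈ l := by
      intro d hd
      simp only [h, List.mem_append, List.mem_cons] at hd ⊢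
      tauto
    cases hw : H.t y with
    | some w =>
      rw [hw] at hyc
      rcases hl.two_arcs hd h' hw (hbc.trans hyc) with h1 | h1
      · exact hl.ne_dag hd hyl hbl h1.symm
      · have := dag_inj h1
        subst this
        simp at hcm
    | none =>
      rw [hw] at hyc
      rw [hyc] at hbc
      have key := hH.ind (fun x => match x with
        | Sum.inl v => ∃ d ∈ b :: m, H.t d = some v
        | Sum.inr d => d ∈ b :: m ∨ H.dag d ∈ b :: m) (by
          intro x z hxz
          cases hxz with
          | dag d => simp only [H.dag_dag]; exact Or.comm
          | incid d v hdv =>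
            constructor
            · rintro (hdm | hdm)
              · exact ⟨d, hdm, hdv⟩
              · obtain ⟨u, u', hu⟩ := List.append_of_mem hdm
                rcases List.eq_nil_or_concat u with rfl | ⟨u0, d', rfl⟩
                · simp only [List.nil_append, List.cons.injEq] at hu
                  rw [hu.1, H.dag_dag, hdv] at hbc
                  cases hbc
                · refine ⟨d', by simp [hu], ?_⟩
                  rw [← hdv]
                  have := hl.adj (l1 := l1 ++ u0) (b := d') (c := H.dag d) (l2 := u' ++ c :: l2)
                    (by rw [h, ← List.cons_append, hu]; simp)
                  rw [← this, H.dag_dag]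
            · rintro ⟨d', hd'm, hd'v⟩
              obtain ⟨u, u', hu⟩ := List.append_of_mem hd'm
              cases u' with
              | nil =>
                rw [hm'] at hu
                have := (List.append_inj' hu rfl).2
                simp only [List.cons.injEq, and_true] at this
                subst this
                rw [hw] at hd'v; cases hd'v
              | cons d'' u' =>
                have := hl.two_arcs hd (l1 := l1 ++ u) (b := d') (c := d'')
                  (l2 := u' ++ c :: l2) (by rw [h, ← List.cons_append, hu]; simp) hd'v hdv
                rcases this with rfl | rfl
                · exact Or.inl hd'm
                · right; rw [H.dag_dag, hu]; simp) (x := Sum.inr b) (by simp) (Sum.inr c)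
      rcases key with h1 | h1
      · exact hcm h1
      · exact hl.ne_dag hd (hsub _ h1) hcl rfl
  by_contra hne
  obtain ⟨u, u', hu⟩ := List.append_of_mem hb
  rw [hu] at hc
  simp only [List.mem_append, List.mem_cons] at hc
  rcases hc with hc | hc | hc
  · obtain ⟨x, x', rfl⟩ := List.append_of_mem hc
    exact main x c x' b u' (by simp [hu]) hbc.symm
  · exact hne hc.symm
  · obtain ⟨x, x', rfl⟩ := List.append_of_mem hc
    exact main u b x c x' hu hbc

/-- Uniqueness of the ordering of a fibre. -/
lemma fiber_unique (hH : H.Connected) (hd : ∀ b, f.fa (H.dag b) = G.dag (f.fa b))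
    (hl : FiberList f a l) {l' : List H.A} (hl' : FiberList f a l') : l = l' := by
  have main : ∀ (m m' : List H.A) s e e', H.IsPath m s e → H.IsPath m' s e' → m.Nodup →
      m'.Nodup → (∀ b, b ∈ m ↔ b ∈ m') → (∀ b ∈ m, b ∈ l) → m = m' := by
    intro m
    induction m with
    | nil =>
      intro m' s e e' _ _ _ _ h _
      symm
      rw [List.eq_nil_iff_forall_not_mem]
      intro b hb
      simpa using (h b).2 hb
    | cons b m ih =>
      intro m' s e e' h1 h2 n1 n2 h hm
      cases m' with
      | nil => simpa using (h b).1 (by simp)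
      | cons b' m' =>
        have : b = b' := src_inj hH hd hl (hm b (by simp)) (hm b' ((h b').2 (by simp)))
          (h1.1.trans h2.1.symm)
        subst this
        congr 1
        simp only [List.nodup_cons] at n1 n2
        refine ih m' _ _ _ h1.2 h2.2 n1.2 n2.2 ?_ (fun x hx => hm x (by simp [hx]))
        intro x
        have := h x
        simp only [List.mem_cons] at this
        constructor
        · intro hx
          rcases this.1 (Or.inr hx) with rfl | h
          · exact absurd hx n1.1
          · exact h
        · intro hx
          rcases this.2 (Or.inr hx) with rfl | h
          · exact absurd hx n2.1
          · exact h
  exact main l l' _ _ _ hl.path hl'.path hl.2.1 hl'.2.1 (fun b => by rw [hl.1, hl'.1])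
    (fun _ h => h)

/-- An arc of the fibre ending outside of the image is followed by the arc starting there. -/
lemma fiber_next (hH : H.Connected) (hd : ∀ b, f.fa (H.dag b) = G.dag (f.fa b))
    (h0 : f.fv none = none) (hl : FiberList f a l) {w : H.V}
    (hw : ∀ v, f.fv (some v) ≠ some w) {b c : H.A} (hb : b ∈ l) (hc : c ∈ l)
    (hbw : H.t b = some w) (hcw : H.t (H.dag c) = some w) : ∃ l1 l2, l = l1 ++ b :: c :: l2 := by
  obtain ⟨u, u', hu⟩ := List.append_of_mem hb
  cases u' with
  | nil =>
    have := hl.last hu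
    rw [hbw] at this
    cases hv : G.t a with
    | none => rw [hv, h0] at this; cases this
    | some v => rw [hv] at this; exact absurd this.symm (hw v)
  | cons d u' =>
    have : d = c := src_inj hH hd hl (by simp [hu]) hc (by rw [hl.adj hu, hbw, hcw])
    subst this
    exact ⟨u, u', hu⟩

end fib

/-- Consecutive arcs in a fibre, meeting at a vertex outside of the image. -/
def Adj {G H : CGraph} (f : PreMap G H) (b c : H.A) : Prop :=
  f.fa b = f.fa c ∧ ∃ w, H.t b = some w ∧ H.t (H.dag c) = some w ∧
    ∀ v, f.fv (some v) ≠ some w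

lemma Adj.flip {G H : CGraph} {f : PreMap G H} (hd : ∀ b, f.fa (H.dag b) = G.dag (f.fa b))
    {b c : H.A} (h : Adj f b c) : Adj f (H.dag c) (H.dag b) := by
  obtain ⟨h1, w, h2, h3, h4⟩ := h
  exact ⟨by rw [hd, hd, h1], w, h3, by rw [H.dag_dag, h2], h4⟩

lemma eqvGen_of_adj {α : Type} (r : α → α → Prop) (m : List α)
    (h : ∀ l1 b c l2, m = l1 ++ b :: c :: l2 → r b c) :
    ∀ x ∈ m, ∀ y ∈ m, Relation.EqvGen r x y := by
  induction m with
  | nil => simp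
  | cons z m ih =>
    have ih' := ih (fun l1 b c l2 hm => h (z :: l1) b c l2 (by simp [hm]))
    have hz : ∀ y ∈ m, Relation.EqvGen r z y := by
      intro y hy
      cases m with
      | nil => simp at hy
      | cons z' m =>
        exact Relation.EqvGen.trans _ _ _ (.rel _ _ (h [] z z' m rfl)) (ih' z' (by simp) y hy)
    intro x hx y hy
    rcases List.mem_cons.1 hx with hx' | hx' <;> rcases List.mem_cons.1 hy with hy' | hy'
    · rw [hx', hy']; exact .refl _
    · rw [hx']; exact hz _ hy'
    · rw [hy']; exact .symm _ _ (hz _ hx')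
    · exact ih' _ hx' _ hy'

end CGraph

namespace CGraph

/-! ### Uniqueness of factorizations -/

/-- `(S, i, p)` is an inert-active factorization of `f`. -/
structure Fac {G H : CGraph} (f : PreMap G H) (S : CGraph) (i : PreMap G S) (p : PreMap S H) :
    Prop where
  conn : S.Connected
  hi : IsGraphMap i
  inert : IsInert i
  hp : IsGraphMap p
  active : IsActive p
  comp : i.comp p = f

namespace Fac

variable {G H S : CGraph} {f : PreMap G H} {i : PreMap G S} {p : PreMap S H}

lemma fv (F : Fac f S i p) (x : Option G.V) : p.fv (i.fv x) = f.fv x := by rw [← F.comp]; rfl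

lemma fa (F : Fac f S i p) (b : H.A) : i.fa (p.fa b) = f.fa b := by rw [← F.comp]; rfl

lemma none_iff (F : Fac f S i p) (x : Option G.V) : i.fv x = none ↔ f.fv x = none := by
  rw [← F.fv]
  refine ⟨fun h => by rw [h, F.hp.1], F.active.1 _⟩

lemma surj (F : Fac f S i p) (s : Option S.V) : ∃ x, i.fv x = s := by
  cases s with
  | none => exact ⟨none, F.hi.1⟩
  | some w =>
    obtain ⟨v, hv, _⟩ := F.inert.1 w
    exact ⟨_, hv⟩

lemma image (F : Fac f S i p) (w : H.V) :
    (∀ v, p.fv (some v) ≠ some w) ↔ ∀ v, f.fv (some v) ≠ some w := by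
  constructor
  · intro h v hv
    rw [← F.fv] at hv
    cases hs : i.fv (some v) with
    | none => rw [hs, F.hp.1] at hv; cases hv
    | some s => rw [hs] at hv; exact h s hv
  · intro h s hs
    obtain ⟨x, hx⟩ := F.surj (some s)
    rw [← hx, F.fv] at hs
    cases x with
    | none => rw [F.hi.1] at hx; cases hx
    | some v => exact h v hs

/-- the intermediate points of the fibres of an inert map are `∞` -/
lemma mid_none (hG : G.Connected) (F : Fac f S i p) {a : G.A} {l : List S.A}
    (hl : FiberList i a l) {l1 b c l2} (h : l = l1 ++ b :: c :: l2) : S.t b = none := by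
  cases hb : S.t b with
  | none => rfl
  | some w =>
    obtain ⟨v, hv, _⟩ := F.inert.1 w
    exact absurd hv (mid_not_image hG F.hi hl h hb v)

lemma t_eq (hG : G.Connected) (F : Fac f S i p) (x : S.A) (hx : S.t x ≠ none) :
    S.t x = i.fv (G.t (i.fa x)) := by
  obtain ⟨l, hl⟩ := F.hi.2.2.1 (i.fa x)
  obtain ⟨u, u', hu⟩ := List.append_of_mem ((hl.1 x).2 rfl)
  cases u' with
  | nil => exact hl.last hu
  | cons c u' => exact absurd (F.mid_none hG hl hu) hx

/-- arcs of `S` with empty fibre end at vertices -/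
lemma empty_t (hH : H.Connected) (F : Fac f S i p) (x : S.A) (hx : ∀ b, p.fa b ≠ x) :
    S.t x ≠ none := by
  intro ht
  have h1 := fiber_nil_eq F.hp hx
  rw [ht, F.hp.1] at h1
  have ht' := F.active.1 _ h1
  have key := F.conn.ind (fun y => y = Sum.inr x ∨ y = Sum.inr (S.dag x)) (by
    intro y z hyz
    cases hyz with
    | dag d =>
      simp only [Sum.inr.injEq]
      constructor
      · rintro (rfl | rfl)
        · simp
        · simp [S.dag_dag]
      · rintro (h | h)
        · right; rw [← h, S.dag_dag]
        · left; exact dag_inj h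
    | incid d v hdv =>
      simp only [Sum.inr.injEq, reduceCtorEq, or_self, iff_false]
      rintro (rfl | rfl)
      · rw [ht] at hdv; cases hdv
      · rw [ht'] at hdv; cases hdv) (x := Sum.inr x) (by simp)
  have hA : ∀ b : H.A, False := by
    intro b
    rcases key (Sum.inr (p.fa b)) with h | h
    · exact hx b (by simpa using h)
    · refine hx (H.dag b) ?_
      simp only [Sum.inr.injEq] at h
      rw [F.hp.2.1, h, S.dag_dag]
  obtain ⟨w | b⟩ := hH.1
  · by_cases hw : ∀ v, p.fv (some v) ≠ some w
    · obtain ⟨b, _⟩ := biv_exists (F.hp.2.2.2.2 w hw).1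
      exact hA b
    · push Not at hw
      obtain ⟨v, _⟩ := hw
      simpa using key (Sum.inl v)
  · exact hA b

lemma empty_fiber (hG : G.Connected) (hH : H.Connected) (F : Fac f S i p) (x : S.A)
    (hx : ∀ b, p.fa b ≠ x) : (∀ y, i.fa y = i.fa x → y = x) ∧ (∀ b, f.fa b ≠ i.fa x) ∧
      f.fv (G.t (i.fa x)) ≠ none := by
  have hx' : ∀ b, p.fa b ≠ S.dag x := by
    intro b hb
    refine hx (H.dag b) ?_
    rw [F.hp.2.1, hb, S.dag_dag]
  have h1 := F.empty_t hH x hx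
  have h2 := F.empty_t hH _ hx'
  obtain ⟨l, hl⟩ := F.hi.2.2.1 (i.fa x)
  have hlx : l = [x] := by
    obtain ⟨u, u', hu⟩ := List.append_of_mem ((hl.1 x).2 rfl)
    cases u' with
    | cons c u' => exact absurd (F.mid_none hG hl hu) h1
    | nil =>
      rcases List.eq_nil_or_concat u with rfl | ⟨u0, d', rfl⟩
      · simpa using hu
      · have hu' : l = u0 ++ d' :: x :: [] := by simp [hu]
        exact absurd ((hl.adj hu').trans (F.mid_none hG hl hu')) h2
  have h3 : ∀ y, i.fa y = i.fa x → y = x := by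
    intro y hy
    have := (hl.1 y).2 hy
    simpa [hlx] using this
  refine ⟨h3, ?_, ?_⟩
  · intro b hb
    rw [← F.fa] at hb
    exact hx b (h3 _ hb)
  · rw [Ne, ← F.none_iff, ← F.t_eq hG x h1]
    exact h1

lemma empty_exists (F : Fac f S i p) (a : G.A)
    (h1 : ∀ b, f.fa b ≠ a) (h2 : f.fv (G.t a) ≠ none) : ∃ x, i.fa x = a := by
  by_contra h
  push Not at h
  exact h2 ((F.none_iff _).1 (F.inert.2 a h))

lemma empty_conv (F : Fac f S i p) (x : S.A)
    (h1 : ∀ b, f.fa b ≠ i.fa x) : ∀ b, p.fa b ≠ x := by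
  rintro b rfl
  exact h1 b (F.fa b).symm

/-- the fibres of `p` are intrinsic -/
lemma fa_iff (F : Fac f S i p) (b c : H.A) :
    p.fa b = p.fa c ↔ Relation.EqvGen (Adj f) b c := by
  constructor
  · intro h
    obtain ⟨m, hm⟩ := F.hp.2.2.1 (p.fa b)
    refine eqvGen_of_adj (Adj f) m ?_ b ((hm.1 b).2 rfl) c ((hm.1 c).2 h.symm)
    intro l1 x y l2 hxy
    have hx := (hm.1 x).1 (by simp [hxy])
    have hy := (hm.1 y).1 (by simp [hxy])
    refine ⟨by rw [← F.fa, ← F.fa, hx, hy], ?_⟩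
    have hne : H.t x ≠ none :=
      (mids_iff m (fun b => H.t b ≠ none)).1 (F.active.2 _ m hm) _ _ _ _ hxy
    obtain ⟨w, hw⟩ := Option.ne_none_iff_exists'.1 hne
    refine ⟨w, hw, by rw [hm.adj hxy, hw], ?_⟩
    exact (F.image w).1 (mid_not_image F.conn F.hp hm hxy hw)
  · intro h
    induction h with
    | refl => rfl
    | symm _ _ _ ih => exact ih.symm
    | trans _ _ _ _ _ ih1 ih2 => exact ih1.trans ih2
    | rel b c h =>
      obtain ⟨h1, w, h2, h3, h4⟩ := h
      obtain ⟨_, x, ⟨m, hm, hmid⟩, _⟩ := F.hp.2.2.2.2 w ((F.image w).2 h4)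
      obtain ⟨l1, y, z, l2, hyz, hy⟩ : ∃ l1 y z l2, m = l1 ++ y :: z :: l2 ∧ H.t y = some w := by
        by_contra hcon
        push Not at hcon
        obtain ⟨j, hj, hjw⟩ := hmid
        exact (mids_iff m (fun b => H.t b ≠ some w)).2 hcon j hj hjw
      have e1 := hm.two_arcs F.hp.2.1 hyz hy h2
      have e2 := hm.two_arcs F.hp.2.1 hyz hy h3
      have hy' := (hm.1 y).1 (by simp [hyz])
      have hz' := (hm.1 z).1 (by simp [hyz])
      have hbc : b ≠ H.dag c := by
        rintro rfl
        rw [← F.fa, ← F.fa, F.hp.2.1, F.hi.2.1] at h1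
        exact G.dag_ne _ h1
      have hc : p.fa c = S.dag (p.fa (H.dag c)) := by rw [F.hp.2.1, S.dag_dag]
      rcases e1 with e1 | e1 <;> rcases e2 with e2 | e2
      · exact absurd (e1.trans e2.symm) hbc
      · rw [e1, dag_inj e2, hy', hz']
      · rw [hc, e2, e1, F.hp.2.1, hz', hy']
      · exact absurd (e1.trans e2.symm) hbc

/-- Compatibility of a pre-map with two factorizations. -/
def Compat {S S' : CGraph} (i : PreMap G S) (p : PreMap S H) (i' : PreMap G S')
    (p' : PreMap S' H) (e : PreMap S S') : Prop := i.comp e = i' ∧ e.comp p' = p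

variable {S' : CGraph} {i' : PreMap G S'} {p' : PreMap S' H}

lemma compat_unique (hG : G.Connected) (hH : H.Connected) (F : Fac f S i p)
    (F' : Fac f S' i' p') {e e' : PreMap S S'} (he : Compat i p i' p' e)
    (he' : Compat i p i' p' e') : e = e' := by
  obtain ⟨ev, ea⟩ := e
  obtain ⟨ev', ea'⟩ := e'
  obtain ⟨h1, h2⟩ := he
  obtain ⟨h1', h2'⟩ := he'
  have hv : ev = ev' := by
    funext s
    obtain ⟨x, rfl⟩ := F.surj s
    exact (congrFun (congrArg PreMap.fv h1) x).trans (congrFun (congrArg PreMap.fv h1') x).symm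
  have ha : ea = ea' := by
    funext x
    by_cases hx : ∃ b, p'.fa b = x
    · obtain ⟨b, rfl⟩ := hx
      exact (congrFun (congrArg PreMap.fa h2) b).trans (congrFun (congrArg PreMap.fa h2') b).symm
    · push Not at hx
      obtain ⟨_, k2, k3⟩ := F'.empty_fiber hG hH x hx
      have q1 : i.fa (ea x) = i'.fa x := congrFun (congrArg PreMap.fa h1) x
      have q2 : i.fa (ea' x) = i'.fa x := congrFun (congrArg PreMap.fa h1') x
      have := F.empty_conv (ea' x) (by rw [q2]; exact k2)
      exact (F.empty_fiber hG hH _ this).1 _ (q1.trans q2.symm)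
  rw [hv, ha]

lemma compat_exists (hG : G.Connected) (hH : H.Connected) (F : Fac f S i p)
    (F' : Fac f S' i' p') : ∃ e : PreMap S S', Compat i p i' p' e := by
  have hv : ∀ s : Option S.V, ∃ s', ∀ x, i.fv x = s → i'.fv x = s' := by
    intro s
    cases s with
    | none =>
      refine ⟨none, fun x hx => ?_⟩
      rw [F'.none_iff, ← F.none_iff, hx]
    | some w =>
      obtain ⟨v, hv, hu⟩ := F.inert.1 w
      refine ⟨i'.fv (some v), fun x hx => ?_⟩
      cases x with
      | none => rw [F.hi.1] at hx; cases hx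
      | some v' => rw [hu v' hx]
  have ha : ∀ x' : S'.A, ∃ x, (∀ b, p'.fa b = x' → p.fa b = x) ∧ i.fa x = i'.fa x' := by
    intro x'
    by_cases hx : ∃ b, p'.fa b = x'
    · obtain ⟨b, rfl⟩ := hx
      refine ⟨p.fa b, fun c hc => ?_, by rw [F.fa, F'.fa]⟩
      rw [F.fa_iff, ← F'.fa_iff, hc]
    · push Not at hx
      obtain ⟨_, k2, k3⟩ := F'.empty_fiber hG hH x' hx
      obtain ⟨x, hx'⟩ := F.empty_exists _ k2 k3
      exact ⟨x, fun b hb => absurd hb (hx b), hx'⟩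
  choose ev hev using hv
  choose ea hea using ha
  refine ⟨⟨ev, ea⟩, ?_, ?_⟩
  · have q1 : ev ∘ i.fv = i'.fv := funext fun x => (hev _ x rfl).symm
    have q2 : i.fa ∘ ea = i'.fa := funext fun x => (hea x).2
    show PreMap.mk (ev ∘ i.fv) (i.fa ∘ ea) = i'
    rw [q1, q2]
  · have q1 : p'.fv ∘ ev = p.fv := by
      funext s
      obtain ⟨x, rfl⟩ := F.surj s
      show p'.fv (ev _) = _
      rw [← hev _ x rfl, F.fv, F'.fv]
    have q2 : ea ∘ p'.fa = p.fa := funext fun b => ((hea _).1 b rfl).symm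
    show PreMap.mk (p'.fv ∘ ev) (ea ∘ p'.fa) = p
    rw [q1, q2]

lemma compat_inv (hG : G.Connected) (hH : H.Connected) (F : Fac f S i p)
    (F' : Fac f S' i' p') {e : PreMap S S'} {g : PreMap S' S} (he : Compat i p i' p' e)
    (hg : Compat i' p' i p g) : e.comp g = PreMap.id S := by
  refine compat_unique hG hH F F ⟨?_, ?_⟩ ⟨rfl, rfl⟩
  · show (i.comp e).comp g = i
    rw [he.1, hg.1]
  · show e.comp (g.comp p) = p
    rw [hg.2, he.2]

lemma compat_t (hG : G.Connected) (hH : H.Connected) (F : Fac f S i p)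
    (F' : Fac f S' i' p') {e : PreMap S S'} (he : Compat i p i' p' e) (x' : S'.A) :
    e.fv (S.t (e.fa x')) = S'.t x' := by
  have c1 : ∀ x, e.fv (i.fv x) = i'.fv x := congrFun (congrArg PreMap.fv he.1)
  have c2 : ∀ x, i.fa (e.fa x) = i'.fa x := congrFun (congrArg PreMap.fa he.1)
  have c3 : ∀ b, e.fa (p'.fa b) = p.fa b := congrFun (congrArg PreMap.fa he.2)
  have hnone : S.t (e.fa x') = none ↔ S'.t x' = none := by
    by_cases hx : ∃ b, p'.fa b = x'
    · obtain ⟨b, rfl⟩ := hx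
      rw [c3]
      obtain ⟨m, hm⟩ := F.hp.2.2.1 (p.fa b)
      obtain ⟨m', hm'⟩ := F'.hp.2.2.1 (p'.fa b)
      have hne : m ≠ [] := List.ne_nil_of_mem ((hm.1 b).2 rfl)
      have hne' : m' ≠ [] := List.ne_nil_of_mem ((hm'.1 b).2 rfl)
      obtain ⟨n, z, hz⟩ : ∃ n z, m = n ++ [z] := ⟨_, _, (List.dropLast_append_getLast hne).symm⟩
      have hzm : z ∈ m' := by
        rw [hm'.1, F'.fa_iff, ← F.fa_iff]
        exact (hm.1 z).1 (by simp [hz])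
      have hzt := hm.last hz
      have hzt' : H.t z = p'.fv (S'.t (p'.fa b)) := by
        obtain ⟨u, u', hu⟩ := List.append_of_mem hzm
        cases u' with
        | nil => exact hm'.last hu
        | cons c u' =>
          exfalso
          have hne : H.t z ≠ none :=
            (mids_iff m' (fun b => H.t b ≠ none)).1 (F'.active.2 _ m' hm') _ _ _ _ hu
          obtain ⟨w, hw⟩ := Option.ne_none_iff_exists'.1 hne
          have k := (F.image w).2 ((F'.image w).1 (mid_not_image F'.conn F'.hp hm' hu hw))
          rw [hw] at hzt
          cases hs : S.t (p.fa b) with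
          | none => rw [hs, F.hp.1] at hzt; cases hzt
          | some s => rw [hs] at hzt; exact k s hzt.symm
      constructor
      · intro h
        rw [h, F.hp.1] at hzt
        exact F'.active.1 _ (hzt'.symm.trans hzt)
      · intro h
        rw [h, F'.hp.1] at hzt'
        exact F.active.1 _ (hzt.symm.trans hzt')
    · push Not at hx
      obtain ⟨_, k2, k3⟩ := F'.empty_fiber hG hH x' hx
      have k4 := F.empty_conv (e.fa x') (by rw [c2]; exact k2)
      simp [F'.empty_t hH x' hx, F.empty_t hH _ k4]
  by_cases h : S.t (e.fa x') = none
  · rw [hnone.1 h, h]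
    rw [← F.hi.1, c1, F'.hi.1]
  · rw [F.t_eq hG _ h, c1, c2, ← F'.t_eq hG _ (fun h' => h (hnone.2 h'))]

lemma compat_map (hG : G.Connected) (hH : H.Connected) (F : Fac f S i p)
    (F' : Fac f S' i' p') {e : PreMap S S'} {g : PreMap S' S} (he : Compat i p i' p' e)
    (hg : Compat i' p' i p g) : IsGraphMap e := by
  have r1 := compat_inv hG hH F F' he hg
  have r2 := compat_inv hG hH F' F hg he
  have v1 : ∀ s, g.fv (e.fv s) = s := congrFun (congrArg PreMap.fv r1)
  have v2 : ∀ s, e.fv (g.fv s) = s := congrFun (congrArg PreMap.fv r2)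
  have a1 : ∀ s, e.fa (g.fa s) = s := congrFun (congrArg PreMap.fa r1)
  have a2 : ∀ s, g.fa (e.fa s) = s := congrFun (congrArg PreMap.fa r2)
  have c1 : ∀ x, e.fv (i.fv x) = i'.fv x := congrFun (congrArg PreMap.fv he.1)
  have c2 : ∀ x, i.fa (e.fa x) = i'.fa x := congrFun (congrArg PreMap.fa he.1)
  have c3 : ∀ b, e.fa (p'.fa b) = p.fa b := congrFun (congrArg PreMap.fa he.2)
  have h0 : e.fv none = none := by rw [← F.hi.1, c1, F'.hi.1]
  have hd : ∀ x, e.fa (S'.dag x) = S.dag (e.fa x) := by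
    have : (⟨e.fv, fun x => S.dag (e.fa (S'.dag x))⟩ : PreMap S S') = e := by
      refine compat_unique hG hH F F' ⟨?_, ?_⟩ he
      · have q1 : e.fv ∘ i.fv = i'.fv := funext c1
        have q2 : i.fa ∘ (fun x => S.dag (e.fa (S'.dag x))) = i'.fa := by
          funext x
          show i.fa (S.dag (e.fa (S'.dag x))) = _
          rw [F.hi.2.1, c2, F'.hi.2.1, G.dag_dag]
        show PreMap.mk (e.fv ∘ i.fv) (i.fa ∘ (fun x => S.dag (e.fa (S'.dag x)))) = i'
        rw [q1, q2]
      · have q1 : p'.fv ∘ e.fv = p.fv := congrArg PreMap.fv he.2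
        have q2 : (fun x => S.dag (e.fa (S'.dag x))) ∘ p'.fa = p.fa := by
          funext b
          show S.dag (e.fa (S'.dag (p'.fa b))) = _
          rw [← F'.hp.2.1, c3, F.hp.2.1, S.dag_dag]
        show PreMap.mk (p'.fv ∘ e.fv) ((fun x => S.dag (e.fa (S'.dag x))) ∘ p'.fa) = p
        rw [q1, q2]
    intro x
    have h := congrFun (congrArg PreMap.fa this) (S'.dag x)
    simp only [S'.dag_dag] at h
    exact h.symm
  refine ⟨h0, hd, ?_, ?_, ?_⟩
  · intro a
    refine ⟨[g.fa a], FiberList.mk' ?_ (by simp) ?_ ?_⟩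
    · intro b
      simp only [List.mem_singleton]
      constructor
      · rintro rfl; exact a1 a
      · rintro rfl; exact (a2 b).symm
    · refine ⟨?_, ?_⟩
      · rw [← compat_t hG hH F F' he, hd, a1]
      · show S'.t (g.fa a) = _
        rw [← compat_t hG hH F F' he, a1]
    · intro l1 b c l2 h
      have := congrArg List.length h
      simp at this
      omega
  · intro v v' h _
    have := congrArg g.fv h
    rw [v1, v1] at this
    cases this
    exact ⟨[], by simp, rfl⟩
  · intro w hw
    exfalso
    cases hs : g.fv (some w) with
    | none =>
      have := v2 (some w)
      rw [hs, h0] at this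
      cases this
    | some s =>
      refine hw s ?_
      rw [← hs, v2]

end Fac

end CGraph

namespace CGraph

/-! ### Existence of factorizations -/

section existence

variable {G H : CGraph} {f : PreMap G H} {a : G.A}

/-- `m` is a maximal `∞`-free segment of the fibre of `a`. -/
def Seg (f : PreMap G H) (a : G.A) (m : List H.A) : Prop :=
  ∃ l0 l3, FiberList f a (l0 ++ m ++ l3) ∧ m ≠ [] ∧
    (∀ l1 b c l2, m = l1 ++ b :: c :: l2 → H.t b ≠ none) ∧
    (∀ l1 b, m = l1 ++ [b] → l3 ≠ [] → H.t b = none) ∧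
    (∀ c l2, m = c :: l2 → l0 ≠ [] → H.t (H.dag c) = none)

lemma seg_split (hH : H.Connected) (hd : ∀ b, f.fa (H.dag b) = G.dag (f.fa b))
    {l : List H.A} (hl : FiberList f a l) (hne : l ≠ []) :
    Seg f a l ∨ ∃ l1 b c l2, l = l1 ++ b :: c :: l2 ∧ H.t b = none ∧
      Seg f a (l1 ++ [b]) ∧ Seg f a (c :: l2) := by
  by_cases h : ∀ l1 b c l2, l = l1 ++ b :: c :: l2 → H.t b ≠ none
  · exact Or.inl ⟨[], [], by simpa using hl, hne, h, by simp, by simp⟩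
  · push Not at h
    obtain ⟨l1, b, c, l2, h, hb⟩ := h
    have hcn : H.t (H.dag c) = none := by rw [hl.adj h, hb]
    have hnd := hl.2.1
    rw [h] at hnd
    refine Or.inr ⟨l1, b, c, l2, h, hb, ⟨[], c :: l2, ?_, by simp, ?_, ?_, by simp⟩,
      ⟨l1 ++ [b], [], ?_, by simp, ?_, by simp, ?_⟩⟩
    · simpa [h] using hl
    · intro u x y u' hxy hx
      have e : l = u ++ x :: y :: (u' ++ c :: l2) := by
        have : l = (l1 ++ [b]) ++ c :: l2 := by simp [h]
        rw [this, hxy]; simp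
      have hyc : y = c := src_inj hH hd hl (by simp [e]) (by simp [h]) (by
        rw [hl.adj e, hx, hcn])
      have hy : y ∈ l1 ++ [b] := by simp [hxy]
      have hnd' : ((l1 ++ [b]) ++ c :: l2).Nodup := by simpa using hnd
      rw [List.nodup_append] at hnd'
      exact hnd'.2.2 y hy c (by simp) hyc
    · intro u x hx _
      have := (List.append_inj' hx rfl).2
      simp only [List.cons.injEq, and_true] at this
      rw [← this, hb]
    · simpa [h] using hl
    · intro u x y u' hxy hx
      have e : l = (l1 ++ b :: u) ++ x :: y :: u' := by
        rw [h, hxy]; simp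
      have hyc : y = c := src_inj hH hd hl (by simp [e]) (by simp [h]) (by
        rw [hl.adj e, hx, hcn])
      have hy : y ∈ l2 := by
        cases u with
        | nil => simp at hxy; simp [hxy.2]
        | cons z u => simp at hxy; simp [hxy.2]
      rw [List.nodup_append, List.nodup_cons, List.nodup_cons] at hnd
      exact hnd.2.1.2.1 (hyc ▸ hy)
    · intro x u hx _
      simp only [List.cons.injEq] at hx
      rw [← hx.1, hcn]

lemma exists_seg (hH : H.Connected) (hf : IsGraphMap f) (b : H.A) :
    ∃ m, Seg f (f.fa b) m ∧ b ∈ m := by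
  obtain ⟨l, hl⟩ := hf.2.2.1 (f.fa b)
  have hb := (hl.1 b).2 rfl
  rcases seg_split hH hf.2.1 hl (List.ne_nil_of_mem hb) with h | ⟨l1, x, y, l2, h, _, h1, h2⟩
  · exact ⟨l, h, hb⟩
  · have : b ∈ l1 ++ [x] ∨ b ∈ y :: l2 := by
      rw [← List.mem_append]; simpa [h] using hb
    rcases this with h | h
    · exact ⟨_, h1, h⟩
    · exact ⟨_, h2, h⟩

lemma Seg.mem_fa {m : List H.A} (hm : Seg f a m) {b : H.A} (hb : b ∈ m) : f.fa b = a := by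
  obtain ⟨l0, l3, hl, _⟩ := hm
  exact (hl.1 b).1 (by simp [hb])

/-- A segment is one class of the equivalence relation generated by `Adj f`. -/
lemma Seg.class_iff (hG : G.Connected) (hH : H.Connected) (hf : IsGraphMap f)
    {m : List H.A} (hm : Seg f a m) {b : H.A} (hb : b ∈ m) (c : H.A) :
    Relation.EqvGen (Adj f) b c ↔ c ∈ m := by
  obtain ⟨l0, l3, hl, hne, hmid, hr, hlft⟩ := hm
  have hd := hf.2.1
  constructor
  · intro h
    have key : ∀ x y, Relation.EqvGen (Adj f) x y → (x ∈ m ↔ y ∈ m) := by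
      intro x y hxy
      induction hxy with
      | refl => exact Iff.rfl
      | symm _ _ _ ih => exact ih.symm
      | trans _ _ _ _ _ ih1 ih2 => exact ih1.trans ih2
      | rel x y hxy =>
        obtain ⟨h1, w, h2, h3, h4⟩ := hxy
        have hnext : x ∈ l0 ++ m ++ l3 → y ∈ l0 ++ m ++ l3 →
            ∃ u u', l0 ++ m ++ l3 = u ++ x :: y :: u' := fun hx hy =>
          fiber_next hH hd hf.1 hl h4 hx hy h2 h3
        have hnd := hl.2.1
        constructor
        · intro hx
          obtain ⟨u, u', hu⟩ := List.append_of_mem hx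
          have hxl : x ∈ l0 ++ m ++ l3 := by simp [hx]
          have hyl : y ∈ l0 ++ m ++ l3 := by rw [hl.1, ← h1, ← hl.1]; exact hxl
          cases u' with
          | cons y' u' =>
            have : y' = y := by
              have e : l0 ++ m ++ l3 = (l0 ++ u) ++ x :: y' :: (u' ++ l3) := by simp [hu]
              refine src_inj hH hd hl (by simp [e]) hyl ?_
              rw [hl.adj e, h2, h3]
            simp [hu, this]
          | nil =>
            exfalso
            by_cases hl3 : l3 = []
            · have := hl.last (l1 := l0 ++ u) (b := x) (by simp [hu, hl3])
              rw [h2] at this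
              cases hv : G.t a with
              | none => rw [hv, hf.1] at this; cases this
              | some v => rw [hv] at this; exact h4 v this.symm
            · have := hr u x hu hl3
              rw [h2] at this; cases this
        · intro hy
          obtain ⟨u, u', hu⟩ := List.append_of_mem hy
          have hyl : y ∈ l0 ++ m ++ l3 := by simp [hy]
          have hxl : x ∈ l0 ++ m ++ l3 := by rw [hl.1, h1, ← hl.1]; exact hyl
          rcases List.eq_nil_or_concat u with rfl | ⟨u0, x', rfl⟩
          · exfalso
            by_cases hl0 : l0 = []
            · have := hl.head (l1 := u' ++ l3) (b := y) (by simp [hu, hl0])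
              rw [h3] at this
              cases hv : G.t (G.dag a) with
              | none => rw [hv, hf.1] at this; cases this
              | some v => rw [hv] at this; exact h4 v this.symm
            · have := hlft y u' hu hl0
              rw [h3] at this; cases this
          · obtain ⟨n, n', hn⟩ := hnext hxl hyl
            have e : l0 ++ m ++ l3 = (l0 ++ u0) ++ x' :: y :: (u' ++ l3) := by simp [hu]
            have hx'w : H.t x' = some w := by rw [← hl.adj e, h3]
            rcases hl.two_arcs hd hn h2 hx'w with h | h
            · simp [hu, h]
            · exact absurd h (hl.ne_dag hd (by simp [e]) hyl)
    exact (key b c h).1 hb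
  · intro hc
    refine eqvGen_of_adj (Adj f) m ?_ b hb c hc
    intro u x y u' hxy
    have e : l0 ++ m ++ l3 = (l0 ++ u) ++ x :: y :: (u' ++ l3) := by simp [hxy]
    have hx := (hl.1 x).1 (by simp [e])
    have hy := (hl.1 y).1 (by simp [e])
    obtain ⟨w, hw⟩ := Option.ne_none_iff_exists'.1 (hmid _ _ _ _ hxy)
    exact ⟨hx.trans hy.symm, w, hw, by rw [hl.adj e, hw], mid_not_image hG hf hl e hw⟩

/-- vertices of `G` not sent to `∞` -/
abbrev CanV (f : PreMap G H) : Type := {v : G.V // f.fv (some v) ≠ none}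

/-- arcs of `G` collapsed to a vertex -/
abbrev CanE (f : PreMap G H) : Type := {a : G.A // (∀ b, f.fa b ≠ a) ∧ f.fv (G.t a) ≠ none}

open Classical in
/-- the inert map on vertices -/
noncomputable def canIv (f : PreMap G H) (x : Option G.V) : Option (CanV f) :=
  x.bind (fun v => if h : f.fv (some v) ≠ none then some ⟨v, h⟩ else none)

/-- the active map on vertices -/
def canPv (f : PreMap G H) (x : Option (CanV f)) : Option H.V := f.fv (x.map Subtype.val)

lemma canIv_some {v : G.V} (h : f.fv (some v) ≠ none) : canIv f (some v) = some ⟨v, h⟩ := by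
  simp [canIv, h]

lemma canIv_none (h0 : f.fv none = none) (x : Option G.V) :
    canIv f x = none ↔ f.fv x = none := by
  cases x with
  | none => simp [canIv, h0]
  | some v => simp [canIv]

lemma canPv_Iv (h0 : f.fv none = none) (x : Option G.V) : canPv f (canIv f x) = f.fv x := by
  cases x with
  | none => simp [canIv, canPv]
  | some v =>
    by_cases h : f.fv (some v) = none
    · rw [(canIv_none h0 _).2 h, h]; exact h0
    · rw [canIv_some h]; rfl

lemma canPv_none (h0 : f.fv none = none) (x : Option (CanV f)) :
    canPv f x = none ↔ x = none := by
  cases x with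
  | none => simp [canPv, h0]
  | some v => simpa [canPv] using v.2

/-- the inert map on classes of arcs -/
def canQa (f : PreMap G H) : Quot (Adj f) → G.A := Quot.lift f.fa (fun _ _ h => h.1)

open Classical in
/-- endpoints in the canonical factorization -/
noncomputable def canT (f : PreMap G H) : CanE f ⊕ Quot (Adj f) → Option (CanV f)
  | Sum.inl a => canIv f (G.t a.1)
  | Sum.inr q => if ∃ b, Quot.mk _ b = q ∧ H.t b = f.fv (G.t (f.fa b)) then
      canIv f (G.t (canQa f q)) else none

lemma canE_dag (hf : IsGraphMap f) (a : CanE f) :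
    (∀ b, f.fa b ≠ G.dag a.1) ∧ f.fv (G.t (G.dag a.1)) ≠ none := by
  refine ⟨fun b hb => a.2.1 (H.dag b) ?_, ?_⟩
  · rw [hf.2.1, hb, G.dag_dag]
  · rw [fiber_nil_eq hf a.2.1]; exact a.2.2

/-- the dagger in the canonical factorization -/
def canDag (hf : IsGraphMap f) : CanE f ⊕ Quot (Adj f) → CanE f ⊕ Quot (Adj f)
  | Sum.inl a => Sum.inl ⟨G.dag a.1, canE_dag hf a⟩
  | Sum.inr q => Sum.inr (Quot.lift (fun b => Quot.mk _ (H.dag b))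
      (fun _ _ h => (Quot.sound (h.flip hf.2.1)).symm) q)

/-- the canonical factorization -/
noncomputable def Can (hf : IsGraphMap f) : CGraph where
  V := CanV f
  A := CanE f ⊕ Quot (Adj f)
  fintypeV := Fintype.ofFinite _
  fintypeA := Fintype.ofFinite _
  dag := canDag hf
  dag_dag := by
    rintro (a | q)
    · simp [canDag, G.dag_dag]
    · induction q using Quot.ind with
      | mk b => simp [canDag, H.dag_dag]
  dag_ne := by
    rintro (a | q) h
    · have := congrArg Subtype.val (Sum.inl.inj h)
      exact G.dag_ne _ this
    · obtain ⟨b, rfl⟩ := Quot.exists_rep q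
      have := congrArg (canQa f) (Sum.inr.inj h)
      have h2 : f.fa (H.dag b) = f.fa b := this
      rw [hf.2.1] at h2
      exact G.dag_ne _ h2
  t := canT f

/-- the inert part -/
noncomputable def canI (hf : IsGraphMap f) : PreMap G (Can hf) where
  fv := canIv f
  fa := fun x => match x with
    | Sum.inl a => a.1
    | Sum.inr q => canQa f q

/-- the active part -/
def canP (hf : IsGraphMap f) : PreMap (Can hf) H where
  fv := canPv f
  fa := fun b => Sum.inr (Quot.mk _ b)

variable (hf : IsGraphMap f)

/-- collapsed arcs as arcs of the canonical factorization -/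
def canInl (x : CanE f) : (Can hf).A := Sum.inl x

lemma can_cases (x : (Can hf).A) : (∃ e, x = canInl hf e) ∨ ∃ b, x = (canP hf).fa b := by
  rcases (x : CanE f ⊕ Quot (Adj f)) with e | q
  · exact Or.inl ⟨e, rfl⟩
  · obtain ⟨b, rfl⟩ := Quot.exists_rep q
    exact Or.inr ⟨b, rfl⟩

lemma canP_ne_inl (b : H.A) (e : CanE f) : (canP hf).fa b ≠ canInl hf e :=
  Sum.inr_ne_inl

lemma canInl_inj {e e' : CanE f} (h : canInl hf e = canInl hf e') : e = e' := Sum.inl.inj h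

lemma canI_inl (e : CanE f) : (canI hf).fa (canInl hf e) = e.1 := rfl

lemma canI_P (b : H.A) : (canI hf).fa ((canP hf).fa b) = f.fa b := rfl

lemma canP_fv_none (x : Option (Can hf).V) : (canP hf).fv x = none ↔ x = none :=
  canPv_none hf.1 x

lemma can_comp : (canI hf).comp (canP hf) = f := by
  have q1 : canPv f ∘ canIv f = f.fv := funext (canPv_Iv hf.1)
  show PreMap.mk (canPv f ∘ canIv f) f.fa = f
  rw [q1]

lemma canP_dag (b : H.A) : (canP hf).fa (H.dag b) = (Can hf).dag ((canP hf).fa b) := rfl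

lemma canI_dag (x : (Can hf).A) : (canI hf).fa ((Can hf).dag x) = G.dag ((canI hf).fa x) := by
  rcases can_cases hf x with ⟨e, rfl⟩ | ⟨b, rfl⟩
  · rfl
  · exact hf.2.1 b

lemma can_t_last (z : H.A) (hz : H.t z = f.fv (G.t (f.fa z))) :
    (Can hf).t ((canP hf).fa z) = canIv f (G.t (f.fa z)) := by
  show canT f (Sum.inr (Quot.mk _ z)) = _
  rw [canT, if_pos ⟨z, rfl, hz⟩]
  rfl

/-- an arc ending at `∞` or in the image is the last one of its segment -/
lemma can_t_end (hG : G.Connected) (hH : H.Connected) (z : H.A)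
    (hz : H.t z = none ∨ ∃ v, f.fv (some v) = H.t z) :
    (canP hf).fv ((Can hf).t ((canP hf).fa z)) = H.t z := by
  have hmid : ∀ (y : H.A) (w : H.V) (v : G.V), H.t y = some w → f.fv (some v) = some w →
      ∀ l, FiberList f (f.fa y) l → ∃ u, l = u ++ [y] := by
    intro y w v h1 h2 l hl
    obtain ⟨u, u', hu⟩ := List.append_of_mem ((hl.1 y).2 rfl)
    cases u' with
    | nil => exact ⟨u, hu⟩
    | cons c u' => exact absurd h2 (mid_not_image hG hf hl hu h1 v)
  cases hzt : H.t z with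
  | some w =>
    rw [hzt] at hz
    obtain ⟨v, hv⟩ : ∃ v, f.fv (some v) = some w := by simpa using hz
    obtain ⟨l, hl⟩ := hf.2.2.1 (f.fa z)
    obtain ⟨u, hu⟩ := hmid z w v hzt hv l hl
    have := hl.last hu
    rw [can_t_last hf z this]
    exact (canPv_Iv hf.1 _).trans (by rw [← this, hzt])
  | none =>
    rw [canP_fv_none]
    show canT f (Sum.inr (Quot.mk _ z)) = _
    rw [canT]
    split_ifs with h
    · obtain ⟨b, hb, hbt⟩ := h
      have hab : f.fa b = f.fa z := congrArg (canQa f) hb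
      show canIv f (G.t (f.fa z)) = none
      rw [canIv_none hf.1, ← hab, ← hbt]
      by_contra hne
      obtain ⟨w, hw⟩ := Option.ne_none_iff_exists'.1 hne
      obtain ⟨m, hm, hzm⟩ := exists_seg hH hf z
      have hbm : b ∈ m := by
        rw [← hm.class_iff hG hH hf hzm]
        exact (Quot.eqvGen_exact hb).symm
      obtain ⟨l0, l3, hl, hne', hm2, hm3, hm4⟩ := hm
      have zl : ∃ u, m = u ++ [z] := by
        obtain ⟨u, u', hu⟩ := List.append_of_mem hzm
        cases u' with
        | nil => exact ⟨u, hu⟩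
        | cons c u' => exact absurd hzt (hm2 _ _ _ _ hu)
      obtain ⟨u, hu⟩ := zl
      have hbz : b ≠ z := by rintro rfl; rw [hzt] at hw; cases hw
      have hbu : b ∈ u := by simpa [hu, hbz] using hbm
      obtain ⟨n, n', hn⟩ := List.append_of_mem hbu
      have hv : ∃ v, f.fv (some v) = some w := by
        rw [hw] at hbt
        cases hv : G.t (f.fa b) with
        | none => rw [hv, hf.1] at hbt; cases hbt
        | some v => rw [hv] at hbt; exact ⟨v, hbt.symm⟩
      obtain ⟨v, hv⟩ := hv
      rw [← hab] at hl
      obtain ⟨y, hy⟩ := hmid b w v hw hv _ hl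
      have hnd := hl.2.1
      have e : l0 ++ m ++ l3 = (l0 ++ n) ++ b :: (n' ++ [z] ++ l3) := by simp [hu, hn]
      rw [e] at hy hnd
      have hb2 : b ∈ n' ++ [z] ++ l3 := by
        have h1 := congrArg List.getLast? hy
        have h2 : (n' ++ [z] ++ l3).getLast? = some b := by
          have hne3 : n' ++ [z] ++ l3 ≠ [] := by simp
          rw [List.getLast?_append, List.getLast?_cons] at h1
          simp only [List.getLast?_append, List.getLast?_singleton] at h1 ⊢
          cases h3 : l3.getLast? <;> simp_all
        exact List.mem_of_getLast? h2
      rw [List.nodup_append, List.nodup_cons] at hnd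
      exact hnd.2.1.1 hb2
    · rfl

/-- the fibres of the active part are the segments -/
lemma canP_fiber (hG : G.Connected) (hH : H.Connected) {m : List H.A} (hm : Seg f a m)
    {b : H.A} (hb : b ∈ m) : FiberList (canP hf) ((canP hf).fa b) m := by
  have hcl := hm.class_iff hG hH hf hb
  obtain ⟨l0, l3, hl, hne, hm2, hm3, hm4⟩ := hm
  have hq : ∀ c, c ∈ m ↔ (canP hf).fa c = (canP hf).fa b := by
    intro c
    rw [← hcl]
    constructor
    · intro h
      exact congrArg Sum.inr (Quot.eqvGen_sound h).symm
    · intro h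
      exact Quot.eqvGen_exact (Sum.inr.inj h).symm
  have hnd := hl.2.1
  refine FiberList.mk' hq ?_ ?_ ?_
  · rw [List.nodup_append, List.nodup_append] at hnd
    exact hnd.1.2.1
  · have hp := hl.path
    rw [isPath_append] at hp
    obtain ⟨e, hp, hp3⟩ := hp
    rw [isPath_append] at hp
    obtain ⟨s, hp0, hp⟩ := hp
    have hs : s = (canP hf).fv ((Can hf).t ((Can hf).dag ((canP hf).fa b))) := by
      obtain ⟨h, u, hu⟩ := List.exists_cons_of_ne_nil hne
      have hps : H.t (H.dag h) = s := by rw [hu] at hp; exact hp.1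
      rw [← (hq h).1 (by simp [hu]), ← canP_dag, ← hps]
      refine (can_t_end hf hG hH _ ?_).symm
      by_cases h0 : l0 = []
      · have := hl.head (b := h) (l1 := u ++ l3) (by simp [h0, hu])
        rw [this]
        cases hv : G.t (G.dag a) with
        | none => left; exact hf.1
        | some v => right; exact ⟨v, rfl⟩
      · left; exact hm4 _ _ hu h0
    have he : e = (canP hf).fv ((Can hf).t ((canP hf).fa b)) := by
      obtain ⟨u, z, hu⟩ : ∃ n z, m = n ++ [z] := ⟨_, _, (List.dropLast_append_getLast hne).symm⟩
      have hps : H.t z = e := by rw [hu] at hp; exact isPath_last hp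
      rw [← (hq z).1 (by simp [hu]), ← hps]
      refine (can_t_end hf hG hH _ ?_).symm
      by_cases h0 : l3 = []
      · have := hl.last (b := z) (l1 := l0 ++ u) (by simp [h0, hu])
        rw [this]
        cases hv : G.t a with
        | none => left; exact hf.1
        | some v => right; exact ⟨v, rfl⟩
      · left; exact hm3 _ _ hu h0
    rw [← hs, ← he]
    exact hp
  · intro u x y u' hxy
    exact hl.biv (l1 := l0 ++ u) (b := x) (c := y) (l2 := u' ++ l3) (by simp [hxy])

lemma canP_image (w : H.V) :
    (∀ v, (canP hf).fv (some v) ≠ some w) ↔ ∀ v, f.fv (some v) ≠ some w := by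
  constructor
  · intro h v hv
    exact h ⟨v, by simp [hv]⟩ hv
  · intro h v hv
    exact h v.1 hv

lemma can_lift_path (l : List G.A) (hl : ∀ c ∈ l, c ∉ Set.range f.fa) :
    ∀ (v v' : CanV f), G.IsPath l (some v.1) (some v'.1) →
      (∃ l' : List (Can hf).A, (∀ c ∈ l', c ∉ Set.range (canP hf).fa) ∧
        (Can hf).IsPath l' (some v) (some v')) ∧
      Relation.EqvGen (Can hf).Touch (Sum.inl v) (Sum.inl v') := by
  induction l with
  | nil =>
    intro v v' h
    have : v = v' := Subtype.ext (Option.some.inj h)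
    subst this
    exact ⟨⟨[], by simp, rfl⟩, .refl _⟩
  | cons a l ih =>
    intro v v' h
    have ha : ∀ b, f.fa b ≠ a := fun b hb => hl a (by simp) ⟨b, hb⟩
    have e := fiber_nil_eq hf ha
    rw [h.1] at e
    cases hu : G.t a with
    | none => rw [hu, hf.1] at e; exact absurd e v.2
    | some u =>
      rw [hu] at e
      have hu' : f.fv (some u) ≠ none := by rw [← e]; exact v.2
      have h2 := h.2
      rw [hu] at h2
      obtain ⟨⟨l', k1, k2⟩, k3⟩ := ih (fun c hc => hl c (by simp [hc])) ⟨u, hu'⟩ v' h2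
      let x : (Can hf).A := canInl hf ⟨a, ha, by rw [hu]; exact hu'⟩
      have x1 : (Can hf).t ((Can hf).dag x) = some v := by
        show canIv f (G.t (G.dag a)) = some v
        rw [h.1, canIv_some v.2]
      have x2 : (Can hf).t x = some (⟨u, hu'⟩ : CanV f) := by
        show canIv f (G.t a) = _
        rw [hu, canIv_some hu']
      refine ⟨⟨x :: l', ?_, x1, ?_⟩, ?_⟩
      · intro c hc
        rcases List.mem_cons.1 hc with rfl | hc
        · rintro ⟨b, hb⟩
          exact canP_ne_inl hf _ _ hb
        · exact k1 c hc
      · rw [x2]; exact k2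
      · refine .trans _ _ _ (.symm _ _ (.rel _ _ (Touch.incid _ _ x1))) ?_
        refine .trans _ _ _ (.symm _ _ (.rel _ _ (Touch.dag x))) ?_
        exact .trans _ _ _ (.rel _ _ (Touch.incid _ _ x2)) k3

lemma can_over (v v' : CanV f) (h : f.fv (some v.1) = f.fv (some v'.1)) :
    (∃ l' : List (Can hf).A, (∀ c ∈ l', c ∉ Set.range (canP hf).fa) ∧
        (Can hf).IsPath l' (some v) (some v')) ∧
      Relation.EqvGen (Can hf).Touch (Sum.inl v) (Sum.inl v') := by
  obtain ⟨l, h1, h2⟩ := hf.2.2.2.1 v.1 v'.1 h v.2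
  exact can_lift_path hf l h1 v v' h2

lemma onFiber_split {w : H.V} (h : OnFiberPath f w a) :
    ∃ l, FiberList f a l ∧ ∃ l1 b c l2, l = l1 ++ b :: c :: l2 ∧ H.t b = some w := by
  obtain ⟨l, hl, j, hj, hjw⟩ := h
  refine ⟨l, hl, ?_⟩
  by_contra hcon
  push Not at hcon
  exact (mids_iff l (fun b => H.t b ≠ some w)).2 hcon j hj hjw

lemma onFiber_of_split {w : H.V} {l : List H.A} (hl : FiberList f a l) {l1 b c l2}
    (h : l = l1 ++ b :: c :: l2) (hb : H.t b = some w) : OnFiberPath f w a := by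
  refine ⟨l, hl, ?_⟩
  by_contra hcon
  have : ∀ (i : ℕ) (h : i + 1 < l.length), H.t (l.get ⟨i, Nat.lt_of_succ_lt h⟩) ≠ some w :=
    fun i hi h => hcon ⟨i, hi, h⟩
  exact (mids_iff l (fun b => H.t b ≠ some w)).1 this _ _ _ _ h hb

lemma canP_nil (x : CanE f) : FiberList (canP hf) (canInl hf x) [] := by
  refine FiberList.mk' ?_ (by simp) ?_ (by simp)
  · intro b
    simp only [List.not_mem_nil, false_iff]
    exact canP_ne_inl hf _ _
  · show canPv f (canIv f (G.t (G.dag x.1))) = canPv f (canIv f (G.t x.1))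
    rw [canPv_Iv hf.1, canPv_Iv hf.1]
    exact fiber_nil_eq hf x.2.1

lemma canP_map (hG : G.Connected) (hH : H.Connected) : IsGraphMap (canP hf) := by
  have h0 : (canP hf).fv none = none := hf.1
  refine ⟨h0, canP_dag hf, ?_, ?_, ?_⟩
  · intro x
    rcases can_cases hf x with ⟨x, rfl⟩ | ⟨b, rfl⟩
    · exact ⟨[], canP_nil hf x⟩
    · obtain ⟨m, hm, hb⟩ := exists_seg hH hf b
      exact ⟨m, canP_fiber hf hG hH hm hb⟩
  · intro v v' h _
    exact (can_over hf v v' h).1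
  · intro w hw
    have hw' := (canP_image hf w).1 hw
    obtain ⟨hbiv, a, ha, _⟩ := hf.2.2.2.2 w hw'
    refine ⟨hbiv, ?_⟩
    obtain ⟨l, hl, l1, b, c, l2, h, hb⟩ := onFiber_split ha
    have hcw : H.t (H.dag c) = some w := by rw [hl.adj h, hb]
    have hadj : Adj f b c := ⟨((hl.1 b).1 (by simp [h])).trans ((hl.1 c).1 (by simp [h])).symm,
      w, hb, hcw, hw'⟩
    have hmk : (canP hf).fa b = (canP hf).fa c := congrArg Sum.inr (Quot.sound hadj)
    obtain ⟨m, hm, hbm⟩ := exists_seg hH hf b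
    have hfib := canP_fiber hf hG hH hm hbm
    have hcm : c ∈ m := (hfib.1 c).2 hmk.symm
    obtain ⟨u, u', hu⟩ := fiber_next hH (canP_dag hf) h0 hfib hw hbm hcm hb hcw
    refine ⟨(canP hf).fa b, onFiber_of_split hfib hu hb, ?_⟩
    intro x hx
    obtain ⟨n, hn, n1, y, z, n2, hyz, hy⟩ := onFiber_split hx
    have hyx := (hn.1 y).1 (by simp [hyz])
    rw [← hyx]
    rcases hl.two_arcs hf.2.1 h hb hy with rfl | rfl
    · exact Or.inl rfl
    · right
      rw [hmk, canP_dag]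

lemma canP_active (hG : G.Connected) (hH : H.Connected) : IsActive (canP hf) := by
  refine ⟨fun x hx => (canPv_none hf.1 x).1 hx, ?_⟩
  intro x l hl
  rw [mids_iff l (fun b => H.t b ≠ none)]
  rcases can_cases hf x with ⟨x, rfl⟩ | ⟨b, rfl⟩
  · have : l = [] := fiber_unique hH (canP_dag hf) hl (canP_nil hf x)
    simp [this]
  · obtain ⟨m, hm, hb⟩ := exists_seg hH hf b
    have : l = m := fiber_unique hH (canP_dag hf) hl (canP_fiber hf hG hH hm hb)
    subst this
    obtain ⟨l0, l3, _, _, h, _⟩ := hm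
    exact h

lemma canI_map (hG : G.Connected) (hH : H.Connected) : IsGraphMap (canI hf) := by
  have h0 : (canI hf).fv none = none := rfl
  have single : ∀ (a : G.A) (x : (Can hf).A), (∀ y, (canI hf).fa y = a ↔ y = x) →
      (Can hf).t x = canIv f (G.t a) → (Can hf).t ((Can hf).dag x) = canIv f (G.t (G.dag a)) →
      FiberList (canI hf) a [x] := by
    intro a x h1 h2 h3
    refine FiberList.mk' ?_ (by simp) ⟨h3, h2⟩ ?_
    · intro y; simp [h1]
    · intro l1 b c l2 h
      have := congrArg List.length h
      simp at this
      omega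
  have hsrc : ∀ (h : H.A), H.t (H.dag h) = f.fv (G.t (G.dag (f.fa h))) →
      (Can hf).t ((Can hf).dag ((canP hf).fa h)) = canIv f (G.t (G.dag (f.fa h))) := by
    intro h hh
    rw [← canP_dag, can_t_last hf _ (by rw [hh, hf.2.1]), hf.2.1]
  refine ⟨h0, canI_dag hf, ?_, ?_, ?_⟩
  · intro a
    obtain ⟨l, hl⟩ := hf.2.2.1 a
    by_cases hne : l = []
    · have hemp : ∀ b, f.fa b ≠ a := by
        intro b hb
        have := (hl.1 b).2 hb
        simp [hne] at this
      have e := fiber_nil_eq hf hemp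
      by_cases hn : f.fv (G.t a) = none
      · refine ⟨[], FiberList.mk' ?_ (by simp) ?_ (by simp)⟩
        · intro x
          rcases can_cases hf x with ⟨x, rfl⟩ | ⟨b, rfl⟩
          · simp only [List.not_mem_nil, false_iff]
            intro h
            have h' : x.1 = a := h
            exact x.2.2 (by rw [h', hn])
          · simp only [List.not_mem_nil, false_iff]
            exact hemp b
        · show canIv f _ = canIv f _
          rw [(canIv_none hf.1 _).2 hn, canIv_none hf.1, e, hn]
      · refine ⟨[canInl hf ⟨a, hemp, hn⟩], single _ _ ?_ rfl rfl⟩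
        intro x
        rcases can_cases hf x with ⟨x, rfl⟩ | ⟨b, rfl⟩
        · constructor
          · intro h
            exact congrArg (canInl hf) (Subtype.ext h)
          · intro h
            exact congrArg Subtype.val (canInl_inj hf h)
        · constructor
          · intro h
            exact absurd h (hemp b)
          · intro h
            exact absurd h (canP_ne_inl hf _ _)
    · have hnoE : ∀ x : CanE f, x.1 ≠ a := by
        rintro x rfl
        obtain ⟨b, hb⟩ := List.exists_mem_of_ne_nil l hne
        exact x.2.1 b ((hl.1 b).1 hb)
      rcases seg_split hH hf.2.1 hl hne with hseg | ⟨l1, b, c, l2, h, hb, hs1, hs2⟩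
      · obtain ⟨h, u, hu⟩ := List.exists_cons_of_ne_nil hne
        obtain ⟨n, z, hz⟩ : ∃ n z, l = n ++ [z] :=
          ⟨_, _, (List.dropLast_append_getLast hne).symm⟩
        have hhl : h ∈ l := by simp [hu]
        have hzl : z ∈ l := by simp [hz]
        have hfib := canP_fiber hf hG hH hseg hhl
        have hha := (hl.1 h).1 hhl
        have hza := (hl.1 z).1 hzl
        have hzh : (canP hf).fa z = (canP hf).fa h := (hfib.1 z).1 hzl
        refine ⟨[(canP hf).fa h], single _ _ ?_ ?_ ?_⟩
        · intro x
          rcases can_cases hf x with ⟨x, rfl⟩ | ⟨y, rfl⟩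
          · constructor
            · intro h
              exact absurd h (hnoE x)
            · intro h
              exact absurd h.symm (canP_ne_inl hf _ _)
          · exact (hl.1 y).symm.trans (hfib.1 y)
        · rw [← hzh, can_t_last hf z (by rw [hza, hl.last hz]), hza]
        · rw [hsrc h (by rw [hha, hl.head hu]), hha]
      · have hf1 := canP_fiber hf hG hH hs1 (b := b) (by simp)
        have hf2 := canP_fiber hf hG hH hs2 (b := c) (by simp)
        have hcn : H.t (H.dag c) = none := by rw [hl.adj h, hb]
        obtain ⟨y, u, hu⟩ := List.exists_cons_of_ne_nil (l := l1 ++ [b]) (by simp)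
        obtain ⟨n, z, hz⟩ : ∃ n z, c :: l2 = n ++ [z] :=
          ⟨_, _, (List.dropLast_append_getLast (by simp)).symm⟩
        have hyl : l = y :: (u ++ c :: l2) := by
          have : l = (l1 ++ [b]) ++ c :: l2 := by simp [h]
          rw [this, hu]; simp
        have hzl : l = (l1 ++ b :: n) ++ [z] := by rw [h, hz]; simp
        have hya := (hl.1 y).1 (by simp [hyl])
        have hza := (hl.1 z).1 (by simp [hzl])
        have hyb : (canP hf).fa y = (canP hf).fa b := (hf1.1 y).1 (by rw [hu]; simp)
        have hzc : (canP hf).fa z = (canP hf).fa c := (hf2.1 z).1 (by rw [hz]; simp)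
        have t1 : (Can hf).t ((canP hf).fa b) = none := by
          have := can_t_end hf hG hH b (Or.inl hb)
          rwa [hb, canP_fv_none] at this
        have t2 : (Can hf).t ((Can hf).dag ((canP hf).fa c)) = none := by
          have := can_t_end hf hG hH (H.dag c) (Or.inl hcn)
          rwa [hcn, canP_fv_none] at this
        refine ⟨[(canP hf).fa b, (canP hf).fa c], FiberList.mk' ?_ ?_ ?_ ?_⟩
        · intro x
          rcases can_cases hf x with ⟨x, rfl⟩ | ⟨y, rfl⟩
          · constructor
            · intro h
              simp only [List.mem_cons, List.not_mem_nil, or_false] at h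
              rcases h with h | h <;> exact absurd h.symm (canP_ne_inl hf _ _)
            · intro h
              exact absurd h (hnoE x)
          · have e1 := hf1.1 y
            have e2 := hf2.1 y
            have e3 := hl.1 y
            have e4 : y ∈ l ↔ y ∈ l1 ++ [b] ∨ y ∈ c :: l2 := by
              rw [← List.mem_append, h]; simp
            simp only [List.mem_cons, List.not_mem_nil, or_false]
            show ((canP hf).fa y = (canP hf).fa b ∨ (canP hf).fa y = (canP hf).fa c) ↔ f.fa y = a
            rw [← e1, ← e2, ← e3, e4]
        · simp only [List.nodup_cons, List.mem_singleton, List.not_mem_nil, not_false_eq_true,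
            List.nodup_nil, and_self, and_true]
          intro hbc
          have hb2 : b ∈ c :: l2 := (hf2.1 b).2 hbc
          have hnd := hl.2.1
          rw [h, List.nodup_append, List.nodup_cons] at hnd
          exact hnd.2.1.1 hb2
        · refine ⟨?_, ?_, ?_⟩
          · rw [← hyb, hsrc y (by rw [hya, hl.head hyl]), hya]; rfl
          · rw [t1, t2]
          · show (Can hf).t _ = _
            rw [← hzc, can_t_last hf z (by rw [hza, hl.last hzl]), hza]; rfl
        · intro u1 x y u2 hxy
          have hlen := congrArg List.length hxy
          have : u1 = [] := by
            rw [← List.length_eq_zero_iff]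
            simp at hlen
            omega
          subst this
          simp only [List.nil_append, List.cons.injEq] at hxy
          left
          rw [← hxy.1, t1]
  · intro v v' h hn
    have hv : f.fv (some v) ≠ none := by
      rw [Ne, ← canIv_none hf.1]; exact hn
    have hv' : f.fv (some v') ≠ none := by
      rw [Ne, ← canIv_none hf.1]; exact fun h' => hn (h.trans h')
    have h2 : canIv f (some v) = canIv f (some v') := h
    rw [canIv_some hv, canIv_some hv'] at h2
    have h3 := congrArg Subtype.val (Option.some.inj h2)
    exact ⟨[], by simp, congrArg some h3⟩
  · intro w hw
    exact absurd (canIv_some w.2) (hw w.1)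

lemma canI_inert : IsInert (canI hf) := by
  refine ⟨?_, ?_⟩
  · intro w
    refine ⟨w.1, canIv_some w.2, ?_⟩
    intro v hv
    have hv' : f.fv (some v) ≠ none := by
      rw [Ne, ← canIv_none hf.1]
      intro h
      have h2 : canIv f (some v) = some w := hv
      rw [h] at h2; cases h2
    have h2 : canIv f (some v) = some w := hv
    rw [canIv_some hv'] at h2
    exact congrArg Subtype.val (Option.some.inj h2)
  · intro a ha
    show canIv f _ = none
    rw [canIv_none hf.1]
    by_contra hn
    by_cases h : ∀ b, f.fa b ≠ a
    · exact ha (Sum.inl ⟨a, h, hn⟩) rfl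
    · push Not at h
      obtain ⟨b, hb⟩ := h
      exact ha ((canP hf).fa b) hb

lemma can_connected (hG : G.Connected) (hH : H.Connected) : (Can hf).Connected := by
  have hne : Nonempty ((Can hf).V ⊕ (Can hf).A) := by
    obtain ⟨w | b⟩ := hH.1
    · by_cases hw : ∀ v, f.fv (some v) ≠ some w
      · obtain ⟨b, _⟩ := biv_exists (hf.2.2.2.2 w hw).1
        exact ⟨Sum.inr ((canP hf).fa b)⟩
      · push Not at hw
        obtain ⟨v, hv⟩ := hw
        exact ⟨Sum.inl ⟨v, by simp [hv]⟩⟩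
    · exact ⟨Sum.inr ((canP hf).fa b)⟩
  refine ⟨hne, ?_⟩
  intro x0
  -- collapsed arcs touch a vertex
  have hE : ∀ x : CanE f, ∃ v : CanV f,
      Relation.EqvGen (Can hf).Touch (Sum.inr (canInl hf x)) (Sum.inl v) := by
    intro x
    obtain ⟨v, hv⟩ : ∃ v, (Can hf).t (canInl hf x) = some v := by
      rw [← Option.ne_none_iff_exists']
      show canIv f _ ≠ none
      rw [Ne, canIv_none hf.1]
      exact x.2.2
    exact ⟨v, .rel _ _ (Touch.incid _ _ hv)⟩
  let P : H.V ⊕ H.A → Prop := fun y => match y with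
    | Sum.inl w => (∀ v : CanV f, f.fv (some v.1) = some w →
          Relation.EqvGen (Can hf).Touch x0 (Sum.inl v)) ∧
        ((∀ v, f.fv (some v) ≠ some w) → ∀ b, H.t b = some w →
          Relation.EqvGen (Can hf).Touch x0 (Sum.inr ((canP hf).fa b)))
    | Sum.inr b => Relation.EqvGen (Can hf).Touch x0 (Sum.inr ((canP hf).fa b))
  have hP : ∀ x y, H.Touch x y → (P x ↔ P y) := by
    intro x y hxy
    cases hxy with
    | dag b =>
      have : Relation.EqvGen (Can hf).Touch (Sum.inr ((canP hf).fa b))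
          (Sum.inr ((canP hf).fa (H.dag b))) := .rel _ _ (Touch.dag _)
      exact ⟨fun h => .trans _ _ _ h this, fun h => .trans _ _ _ h (.symm _ _ this)⟩
    | incid b w hbw =>
      by_cases hw : ∀ v, f.fv (some v) ≠ some w
      · constructor
        · intro h
          refine ⟨fun v hv => absurd hv (hw v.1), fun _ b' hb' => .trans _ _ _ h ?_⟩
          obtain ⟨_, a, ha, _⟩ := hf.2.2.2.2 w hw
          obtain ⟨l, hl, l1, y, z, l2, e, hy⟩ := onFiber_split ha
          have hadj : Adj f y z :=
            ⟨((hl.1 y).1 (by simp [e])).trans ((hl.1 z).1 (by simp [e])).symm,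
              w, hy, by rw [hl.adj e, hy], hw⟩
          have hmk : (canP hf).fa y = (canP hf).fa z := congrArg Sum.inr (Quot.sound hadj)
          have hyz : Relation.EqvGen (Can hf).Touch (Sum.inr ((canP hf).fa y))
              (Sum.inr ((canP hf).fa (H.dag z))) := by
            rw [hmk]; exact .rel _ _ (Touch.dag _)
          rcases hl.two_arcs hf.2.1 e hy hbw with rfl | rfl <;>
            rcases hl.two_arcs hf.2.1 e hy hb' with rfl | rfl
          · exact .refl _
          · exact hyz
          · exact .symm _ _ hyz
          · exact .refl _
        · intro h
          exact h.2 hw b hbw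
      · have hw' := hw
        push Not at hw'
        obtain ⟨v0, hv0⟩ := hw'
        have ht := can_t_end hf hG hH b (Or.inr ⟨v0, by rw [hv0, hbw]⟩)
        obtain ⟨v, hv⟩ : ∃ v, (Can hf).t ((canP hf).fa b) = some v := by
          rw [← Option.ne_none_iff_exists', Ne, ← canP_fv_none hf, ht, hbw]
          simp
        have htouch : Relation.EqvGen (Can hf).Touch (Sum.inr ((canP hf).fa b)) (Sum.inl v) :=
          .rel _ _ (Touch.incid _ _ hv)
        have hvw : f.fv (some v.1) = some w := by
          rw [hv, hbw] at ht
          exact ht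
        constructor
        · intro h
          refine ⟨fun v' hv' => ?_, fun h => absurd h hw⟩
          exact .trans _ _ _ (.trans _ _ _ h htouch) (can_over hf v v' (by rw [hvw, hv'])).2
        · intro h
          exact .trans _ _ _ (h.1 v hvw) (.symm _ _ htouch)
  have hstartV : ∀ v : CanV f, Relation.EqvGen (Can hf).Touch x0 (Sum.inl v) → ∃ y, P y := by
    intro v hv
    obtain ⟨w, hw⟩ := Option.ne_none_iff_exists'.1 v.2
    refine ⟨Sum.inl w, fun v' hv' => ?_, fun h => absurd hw (h v.1)⟩
    exact .trans _ _ _ hv (can_over hf v v' (by rw [hw, hv'])).2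
  have hstart : ∃ y, P y := by
    rcases x0 with v | x
    · exact hstartV v (.refl _)
    rcases can_cases hf x with ⟨x, rfl⟩ | ⟨b, rfl⟩
    · obtain ⟨v, hv⟩ := hE x
      exact hstartV v hv
    · exact ⟨Sum.inr b, .refl _⟩
  obtain ⟨y0, hy0⟩ := hstart
  have hall := hH.ind P hP hy0
  have hallV : ∀ v : CanV f, Relation.EqvGen (Can hf).Touch x0 (Sum.inl v) := by
    intro v
    obtain ⟨w, hw⟩ := Option.ne_none_iff_exists'.1 v.2
    exact (hall (Sum.inl w)).1 v hw
  rintro (v | x)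
  · exact hallV v
  rcases can_cases hf x with ⟨x, rfl⟩ | ⟨b, rfl⟩
  · obtain ⟨v, hv⟩ := hE x
    exact .trans _ _ _ (hallV v) (.symm _ _ hv)
  · exact hall (Sum.inr b)

end existence

end CGraph

open CGraph in
theorem inert_active_factorization (G H : CGraph) (hG : G.Connected) (hH : H.Connected)
    (f : PreMap G H) (hf : IsGraphMap f) :
    (∃ (S : CGraph) (_ : S.Connected) (i : PreMap G S) (p : PreMap S H),
      IsGraphMap i ∧ IsInert i ∧ IsGraphMap p ∧ IsActive p ∧ i.comp p = f) ∧
    (∀ (S S' : CGraph), S.Connected → S'.Connected →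
      ∀ (i : PreMap G S) (p : PreMap S H) (i' : PreMap G S') (p' : PreMap S' H),
        IsGraphMap i → IsInert i → IsGraphMap p → IsActive p → i.comp p = f →
        IsGraphMap i' → IsInert i' → IsGraphMap p' → IsActive p' → i'.comp p' = f →
        ∃! e : PreMap S S', IsGraphIso e ∧ i.comp e = i' ∧ e.comp p' = p) := by
  refine ⟨⟨Can hf, can_connected hf hG hH, canI hf, canP hf, canI_map hf hG hH, canI_inert hf,
    canP_map hf hG hH, canP_active hf hG hH, can_comp hf⟩, ?_⟩
  intro S S' hS hS' i p i' p' h1 h2 h3 h4 h5 h1' h2' h3' h4' h5'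
  have F : Fac f S i p := ⟨hS, h1, h2, h3, h4, h5⟩
  have F' : Fac f S' i' p' := ⟨hS', h1', h2', h3', h4', h5'⟩
  obtain ⟨e, he⟩ := Fac.compat_exists hG hH F F'
  obtain ⟨g, hg⟩ := Fac.compat_exists hG hH F' F
  refine ⟨e, ⟨⟨Fac.compat_map hG hH F F' he hg, g, Fac.compat_map hG hH F' F hg he,
    Fac.compat_inv hG hH F F' he hg, Fac.compat_inv hG hH F' F hg he⟩, he.1, he.2⟩, ?_⟩
  rintro e' ⟨_, k1, k2⟩
  exact Fac.compat_unique hG hH F F' ⟨k1, k2⟩ he
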